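/- arXiv:2110.14948 — 3 statements merged into one kernel-verified Lean document; each statement's English description precedes it below -/
import Mathlib

section
/- Let U be a finite set with |U| = n and w : U → (0,∞) a positive weight function with total weight W = Σ_{a∈U} w(a). Let a₁, …, a_m (m ≥ 2) be i.i.d. proportional samples, and let Z = C(m,2)^{-1} · Σ_{1 ≤ i < j ≤ m} Y_{ij}, where Y_{ij} = 1/w(a_i) if a_i = a_j and Y_{ij} = 0 otherwise. Then E[Z] = 1/W, i.e., the reciprocal 1/Ŵ of the estimate Ŵ = 1/Z is an unbiased estimator of 1/W. -/
open MeasureTheory ProbabilityTheory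

/-- A set whose outer measure and that of its complement add up to at most the total mass of a
finite measure is null measurable. -/
theorem nullMeasurableSet_of_measure_add_compl_le {Ω : Type*} [MeasurableSpace Ω] {μ : Measure Ω}
    [IsFiniteMeasure μ] {s : Set Ω} (h : μ s + μ sᶜ ≤ μ Set.univ) : NullMeasurableSet s μ := by
  set t := toMeasurable μ s
  set t' := toMeasurable μ sᶜ
  have ht : s ⊆ t := subset_toMeasurable μ s
  have ht' : sᶜ ⊆ t' := subset_toMeasurable μ sᶜ
  have hunion : t ∪ t' = Set.univ :=
    Set.eq_univ_of_forall fun x ↦ (em (x ∈ s)).imp (fun hx ↦ ht hx) (fun hx ↦ ht' hx)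
  have hadd : μ Set.univ + μ (t ∩ t') = μ s + μ sᶜ := by
    rw [← hunion, measure_union_add_inter t (measurableSet_toMeasurable μ sᶜ),
      measure_toMeasurable, measure_toMeasurable]
  have hinter : μ (t ∩ t') = 0 := by
    refine le_antisymm ?_ zero_le
    rw [← ENNReal.add_le_add_iff_left (measure_ne_top μ Set.univ), hadd, add_zero]
    exact h
  refine ⟨t, measurableSet_toMeasurable μ s, ?_⟩
  refine Filter.EventuallyLE.antisymm (LE.le.eventuallyLE ht) ?_
  rw [ae_le_set]
  exact measure_mono_null (t := t ∩ t') (fun x hx ↦ ⟨hx.1, ht' hx.2⟩) hinter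

/-- The fibers of a function into a finite type are null measurable as soon as their outer measures
add up to the total mass. -/
theorem nullMeasurableSet_fiber_of_sum_le {Ω V : Type*} [MeasurableSpace Ω] {μ : Measure Ω}
    [IsFiniteMeasure μ] [Fintype V] {A : Ω → V}
    (h : ∑ v, μ {ω | A ω = v} ≤ μ Set.univ) (v : V) : NullMeasurableSet {ω | A ω = v} μ := by
  classical
  refine nullMeasurableSet_of_measure_add_compl_le (le_trans ?_ h)
  rw [← Finset.add_sum_erase _ _ (Finset.mem_univ v)]
  gcongr
  refine (measure_mono ?_).trans (measure_biUnion_finset_le _ _)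
  intro ω hω
  simpa using hω

/-- The expectation of a function of a finitely valued random element is the sum of its values
weighted by the masses of the fibers. -/
theorem integral_comp_eq_sum_fiber {Ω V : Type*} [MeasurableSpace Ω] {μ : Measure Ω}
    [IsFiniteMeasure μ] [Fintype V] {A : Ω → V}
    (hA : ∀ v, NullMeasurableSet {ω | A ω = v} μ) (f : V → ℝ) :
    ∫ ω, f (A ω) ∂μ = ∑ v, μ.real {ω | A ω = v} * f v := by
  classical
  have hdecomp (ω : Ω) : f (A ω) = ∑ v, Set.indicator {ω | A ω = v} (fun _ ↦ f v) ω := by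
    simp [Set.indicator_apply]
  simp_rw [hdecomp]
  rw [integral_finsetSum _ fun v _ ↦ (integrable_const (f v)).indicator₀ (hA v)]
  refine Finset.sum_congr rfl fun v _ ↦ ?_
  rw [integral_indicator₀ (hA v), setIntegral_const, smul_eq_mul]

/-- Under a product of copies of a probability vector `p`, two distinct coordinates
are independent: the expectation of `g` on the event that they coincide is `∑ x, p x ^ 2 * g x`. -/
theorem sum_prod_mul_ite_eq {ι U : Type*} [Fintype ι] [DecidableEq ι] [Fintype U] [DecidableEq U]
    {p : U → ℝ} (hp : ∑ x, p x = 1) (g : U → ℝ) {i j : ι} (hij : i ≠ j) :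
    ∑ v : ι → U, (∏ k, p (v k)) * (if v i = v j then g (v i) else 0) = ∑ x, p x ^ 2 * g x := by
  have hsplit (v : ι → U) : (∏ k, p (v k)) * (if v i = v j then g (v i) else 0) =
      ∑ x, (∏ k, if k = i ∨ k = j then (if v k = x then p x else 0) else p (v k)) * g x := by
    rw [Finset.sum_eq_single (v i)]
    · split_ifs with h
      · congr 1
        refine Finset.prod_congr rfl fun k _ ↦ ?_
        grind
      · rw [mul_zero, Finset.prod_eq_zero (Finset.mem_univ j), zero_mul]
        simp [Ne.symm h]
    · intro x _ hx
      rw [Finset.prod_eq_zero (Finset.mem_univ i), zero_mul]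
      simp [hx.symm]
    · simp
  simp_rw [hsplit]
  rw [Finset.sum_comm]
  refine Finset.sum_congr rfl fun x _ ↦ ?_
  rw [← Finset.sum_mul]
  congr 1
  have hfactor := Finset.prod_univ_sum (fun _ : ι ↦ (Finset.univ : Finset U))
    (fun k y ↦ if k = i ∨ k = j then (if y = x then p x else 0) else p y)
  rw [Fintype.piFinset_univ] at hfactor
  rw [← hfactor]
  have hmarginal (k : ι) : ∑ y, (if k = i ∨ k = j then (if y = x then p x else 0) else p y) =
      if k ∈ ({i, j} : Finset ι) then p x else 1 := by
    by_cases h : k = i ∨ k = j <;> simp [h, hp]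
  simp_rw [hmarginal]
  rw [Finset.prod_ite_mem, Finset.univ_inter, Finset.prod_const, Finset.card_pair hij]

/-- The number of pairs `i < j` in `Fin m` is `m.choose 2`. -/
theorem sum_card_Ioi_fin (m : ℕ) : ∑ i : Fin m, (Finset.Ioi i).card = m.choose 2 := by
  simp_rw [Fin.card_Ioi]
  rw [Fin.sum_univ_eq_sum_range (fun i ↦ m - 1 - i), Finset.sum_range_reflect (fun i ↦ i),
    Finset.sum_range_id, Nat.choose_two_right]

/-- For `m ≥ 2` i.i.d. proportional samples, the averaged pair estimator
`Z = C(m,2)⁻¹ · Σ_{i<j} Y_{ij}` satisfies `E[Z] = 1/W`, i.e. the reciprocal of the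
estimate `Ŵ = 1/Z` is an unbiased estimator of `1/W`. -/
theorem averaged_pair_estimator_unbiased
    {Ω U : Type*} [MeasurableSpace Ω] (μ : Measure Ω) [IsProbabilityMeasure μ]
    [Fintype U] [DecidableEq U]
    (n : ℕ) (hn : Fintype.card U = n)
    (w : U → ℝ) (hw : ∀ x, 0 < w x)
    (W : ℝ) (hW : W = ∑ x, w x)
    (m : ℕ) (hm : 2 ≤ m) (a : Fin m → Ω → U)
    (hlaw : ∀ v : Fin m → U,
      μ {ω | ∀ i, a i ω = v i} = ∏ i, ENNReal.ofReal (w (v i) / W))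
    (Y : Fin m → Fin m → Ω → ℝ)
    (hY : ∀ i j ω, Y i j ω = if a i ω = a j ω then (w (a i ω))⁻¹ else 0)
    (Z : Ω → ℝ)
    (hZ : ∀ ω, Z ω = ((m.choose 2 : ℝ))⁻¹ * ∑ i, ∑ j ∈ Finset.Ioi i, Y i j ω) :
    ∫ ω, Z ω ∂μ = W⁻¹ := by
  classical
  let A : Ω → Fin m → U := fun ω i ↦ a i ω
  obtain ⟨ω₀⟩ : Nonempty Ω := μ.nonempty_of_neZero
  have hWpos : 0 < W := by
    rw [hW]
    exact Finset.sum_pos (fun x _ ↦ hw x) ⟨a ⟨0, by lia⟩ ω₀, Finset.mem_univ _⟩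
  have hp : ∑ x, w x / W = 1 := by
    rw [← Finset.sum_div, ← hW, div_self hWpos.ne']
  have hpnonneg (x : U) : 0 ≤ w x / W := (div_pos (hw x) hWpos).le
  have hmass (v : Fin m → U) : μ {ω | A ω = v} = ENNReal.ofReal (∏ i, w (v i) / W) := by
    rw [ENNReal.ofReal_prod_of_nonneg fun i _ ↦ hpnonneg (v i), ← hlaw v]
    simp only [A, funext_iff]
  have htotal : ∑ v, μ {ω | A ω = v} ≤ μ Set.univ := by
    simp_rw [hmass]
    rw [← ENNReal.ofReal_sum_of_nonneg fun v _ ↦ Finset.prod_nonneg fun i _ ↦ hpnonneg (v i),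
      ← Fintype.piFinset_univ,
      ← Finset.prod_univ_sum (fun _ : Fin m ↦ Finset.univ) (fun _ x ↦ w x / W)]
    simp [hp]
  have hnull := nullMeasurableSet_fiber_of_sum_le htotal
  have hpair {i j : Fin m} (hij : i ≠ j) :
      ∑ v : Fin m → U, (∏ k, w (v k) / W) * (if v i = v j then (w (v i))⁻¹ else 0) = W⁻¹ := by
    rw [sum_prod_mul_ite_eq hp (fun x ↦ (w x)⁻¹) hij, ← mul_one W⁻¹, ← hp, Finset.mul_sum]
    refine Finset.sum_congr rfl fun x _ ↦ ?_
    have := (hw x).ne'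
    field_simp
  let f : (Fin m → U) → ℝ := fun v ↦ (m.choose 2 : ℝ)⁻¹ *
    ∑ i, ∑ j ∈ Finset.Ioi i, if v i = v j then (w (v i))⁻¹ else 0
  have hZA (ω : Ω) : Z ω = f (A ω) := by
    simp only [hZ, hY, f, A]
  have hchoose : (m.choose 2 : ℝ) ≠ 0 := by exact_mod_cast (Nat.choose_pos hm).ne'
  calc ∫ ω, Z ω ∂μ = ∑ v, μ.real {ω | A ω = v} * f v := by
        simp_rw [hZA]
        exact integral_comp_eq_sum_fiber hnull f
    _ = (m.choose 2 : ℝ)⁻¹ * ∑ i, ∑ j ∈ Finset.Ioi i, ∑ v : Fin m → U,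
          (∏ k, w (v k) / W) * (if v i = v j then (w (v i))⁻¹ else 0) := by
        simp_rw [f, measureReal_def, hmass,
          ENNReal.toReal_ofReal (Finset.prod_nonneg fun i _ ↦ hpnonneg _), Finset.mul_sum,
          mul_left_comm _ (m.choose 2 : ℝ)⁻¹]
        rw [Finset.sum_comm]
        simp_rw [Finset.sum_comm (s := Finset.univ) (t := Finset.Ioi _)]
    _ = (m.choose 2 : ℝ)⁻¹ * ∑ i : Fin m, ∑ _j ∈ Finset.Ioi i, W⁻¹ := by
        congr 1
        exact Finset.sum_congr rfl fun i _ ↦ Finset.sum_congr rfl fun j hj ↦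
          hpair (Finset.mem_Ioi.1 hj).ne
    _ = W⁻¹ := by
        simp_rw [Finset.sum_const, nsmul_eq_mul]
        rw [← Finset.sum_mul, ← Nat.cast_sum, sum_card_Ioi_fin, inv_mul_cancel_left₀ hchoose]
end

section
/- Let U be a finite set with |U| = n and w : U → (0,∞) a positive weight function with total weight W = Σ_{a∈U} w(a). Let a₁, …, a_m (m ≥ 2) be i.i.d. proportional samples, and let Z = C(m,2)^{-1} · Σ_{1 ≤ i < j ≤ m} Y_{ij}, where Y_{ij} = 1/w(a_i) if a_i = a_j and Y_{ij} = 0 otherwise. Then Var(Z) ≤ C(m,2)^{-1} · n/W². -/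
open MeasureTheory ProbabilityTheory

section ProductExpectation

variable {ι U : Type*} [Fintype ι] [DecidableEq ι] [Fintype U]

/-- Expectation of `f` under the product of copies of the weight `p`, as a finite sum. -/
noncomputable def prodExpect (p : U → ℝ) (f : (ι → U) → ℝ) : ℝ :=
  ∑ v, (∏ i, p (v i)) * f v

/-- Resampling one coordinate does not change the expectation. -/
lemma prodExpect_resample {p : U → ℝ} (hp : ∑ x, p x = 1) (j : ι) (f : (ι → U) → ℝ) :
    prodExpect p f = prodExpect p fun v ↦ ∑ x, p x * f (Function.update v j x) := by
  classical
  have split (h : (ι → U) → ℝ) : prodExpect p h =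
      ∑ y, ∑ u : {i // i ≠ j} → U, (p y * ∏ i, p (u i)) *
        h ((Equiv.funSplitAt j U).symm (y, u)) := by
    rw [prodExpect, ← (Equiv.funSplitAt j U).symm.sum_comp, Fintype.sum_prod_type]
    refine Finset.sum_congr rfl fun y _ ↦ Finset.sum_congr rfl fun u _ ↦ ?_
    rw [Fintype.prod_eq_mul_prod_subtype_ne _ j]
    congr 2
    · simp
    · exact Finset.prod_congr rfl fun i _ ↦ by simp [i.2]
  have update_split (y x : U) (u : {i // i ≠ j} → U) :
      Function.update ((Equiv.funSplitAt j U).symm (y, u)) j x =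
        (Equiv.funSplitAt j U).symm (x, u) := by
    ext i
    by_cases hi : i = j
    · subst hi; simp
    · simp [hi]
  rw [split, split]
  simp_rw [update_split, mul_assoc, ← Finset.mul_sum]
  rw [← Finset.sum_mul, hp, one_mul]
  simp_rw [Finset.mul_sum]
  conv_rhs => rw [Finset.sum_comm]
  refine Finset.sum_congr rfl fun y _ ↦ Finset.sum_congr rfl fun u _ ↦ ?_
  ring

lemma prodExpect_const {p : U → ℝ} (hp : ∑ x, p x = 1) (c : ℝ) :
    prodExpect p (fun _ : ι → U ↦ c) = c := by
  rw [prodExpect, ← Finset.sum_mul, ← Fintype.prod_sum (fun _ : ι ↦ p)]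
  simp [hp]

lemma prodExpect_sum {κ : Type*} (s : Finset κ) (p : U → ℝ) (f : κ → (ι → U) → ℝ) :
    prodExpect p (fun v ↦ ∑ k ∈ s, f k v) = ∑ k ∈ s, prodExpect p (f k) := by
  simp_rw [prodExpect, Finset.mul_sum]
  exact Finset.sum_comm

lemma prodExpect_const_mul (p : U → ℝ) (c : ℝ) (f : (ι → U) → ℝ) :
    prodExpect p (fun v ↦ c * f v) = c * prodExpect p f := by
  simp_rw [prodExpect, Finset.mul_sum]
  exact Finset.sum_congr rfl fun v _ ↦ by ring

end ProductExpectation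

section Collision

variable {ι U : Type*} [Fintype ι] [DecidableEq ι] [Fintype U] [DecidableEq U]

/-- The collision estimator of a pair of coordinates, centered by `1 / W`. -/
noncomputable def centeredCollision (w : U → ℝ) (W : ℝ) (i j : ι) (v : ι → U) : ℝ :=
  (if v i = v j then (w (v i))⁻¹ else 0) - W⁻¹

lemma centeredCollision_comm {ι U : Type*} [DecidableEq U] (w : U → ℝ) (W : ℝ) (i j : ι) (v : ι → U) :
    centeredCollision w W i j v = centeredCollision w W j i v := by
  unfold centeredCollision
  by_cases h : v i = v j
  · simp [h]
  · simp [h, Ne.symm h]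

/-- Conditionally on all coordinates but `j`, the centered estimator has mean zero. -/
lemma sum_mul_centeredCollision_update {ι U : Type*} [DecidableEq ι] [Fintype U] [DecidableEq U]
    {w : U → ℝ} (hw : ∀ x, 0 < w x) {W : ℝ}
    (hp : ∑ x, w x / W = 1) {i j : ι} (hij : i ≠ j) (v : ι → U) :
    ∑ x, w x / W * centeredCollision w W i j (Function.update v j x) = 0 := by
  have := (hw (v i)).ne'
  simp only [centeredCollision, Function.update_self, Function.update_of_ne hij, mul_sub,
    Finset.sum_sub_distrib, ← Finset.sum_mul, hp, mul_ite, mul_zero, Finset.sum_ite_eq,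
    Finset.mem_univ, if_true]
  field_simp
  ring

lemma prodExpect_centeredCollision_mul {w : U → ℝ} (hw : ∀ x, 0 < w x) {W : ℝ}
    (hp : ∑ x, w x / W = 1) {i j : ι} (hij : i ≠ j) {F : (ι → U) → ℝ}
    (hF : ∀ v x, F (Function.update v j x) = F v) :
    prodExpect (fun x ↦ w x / W) (fun v ↦ centeredCollision w W i j v * F v) = 0 := by
  rw [prodExpect_resample hp j]
  simp_rw [hF, ← mul_assoc, ← Finset.sum_mul, sum_mul_centeredCollision_update hw hp hij]
  simp [prodExpect]

/-- Centered estimators of two different pairs are uncorrelated. -/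
lemma prodExpect_centeredCollision_mul_of_ne {m : ℕ} {w : U → ℝ} (hw : ∀ x, 0 < w x) {W : ℝ}
    (hp : ∑ x, w x / W = 1) {i j k l : Fin m} (hij : i < j) (hkl : k < l)
    (hne : ¬ (i = k ∧ j = l)) :
    prodExpect (fun x ↦ w x / W)
      (fun v ↦ centeredCollision w W i j v * centeredCollision w W k l v) = 0 := by
  have indep {t : Fin m} (hk : k ≠ t) (hl : l ≠ t) (v : Fin m → U) (x : U) :
      centeredCollision w W k l (Function.update v t x) = centeredCollision w W k l v := by
    simp [centeredCollision, hk, hl]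
  by_cases hj : k ≠ j ∧ l ≠ j
  · exact prodExpect_centeredCollision_mul hw hp hij.ne (indep hj.1 hj.2)
  · simp_rw [centeredCollision_comm w W i j]
    exact prodExpect_centeredCollision_mul hw hp hij.ne' (indep (by omega) (by omega))

lemma prodExpect_centeredCollision_sq {w : U → ℝ} (hw : ∀ x, 0 < w x) {W : ℝ} (hW : W ≠ 0)
    (hp : ∑ x, w x / W = 1) {i j : ι} (hij : i ≠ j) :
    prodExpect (fun x ↦ w x / W)
      (fun v ↦ centeredCollision w W i j v * centeredCollision w W i j v) =
      Fintype.card U / W ^ 2 - (W ^ 2)⁻¹ := by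
  have inner (v : ι → U) : ∑ x, w x / W * (centeredCollision w W i j (Function.update v j x) *
      centeredCollision w W i j (Function.update v j x)) = (w (v i))⁻¹ / W - (W ^ 2)⁻¹ := by
    have hv := (hw (v i)).ne'
    have expand (x : U) : w x / W * (centeredCollision w W i j (Function.update v j x) *
        centeredCollision w W i j (Function.update v j x)) =
        (if v i = x then w x / W * ((w (v i))⁻¹ * (w (v i))⁻¹ - W⁻¹ * (w (v i))⁻¹) else 0) -
          W⁻¹ * (w x / W * centeredCollision w W i j (Function.update v j x)) := by
      simp only [centeredCollision, Function.update_self, Function.update_of_ne hij]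
      split_ifs <;> ring
    simp_rw [expand, Finset.sum_sub_distrib, ← Finset.mul_sum,
      sum_mul_centeredCollision_update hw hp hij]
    simp only [Finset.sum_ite_eq, Finset.mem_univ, if_true]
    field_simp
    ring
  rw [prodExpect_resample hp j]
  simp_rw [inner]
  rw [prodExpect_resample hp i]
  simp only [Function.update_self, mul_sub, Finset.sum_sub_distrib, ← Finset.sum_mul, hp]
  rw [prodExpect_const hp]
  have (x : U) : w x / W * ((w x)⁻¹ / W) = (W ^ 2)⁻¹ := by
    have := (hw x).ne'
    field_simp
  simp_rw [this]
  simp [div_eq_mul_inv]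

end Collision

lemma card_sigma_Ioi (m : ℕ) :
    ((Finset.univ : Finset (Fin m)).sigma fun i ↦ Finset.Ioi i).card = m.choose 2 := by
  rw [Finset.card_sigma]
  simp_rw [Fin.card_Ioi]
  rw [Fin.sum_univ_eq_sum_range (fun i ↦ m - 1 - i), Finset.sum_range_reflect (fun i ↦ i),
    Finset.sum_range_id, Nat.choose_two_right]

/-- A map to a finite type is a.e. measurable once the outer measures of its fibers add up to the
total mass. -/
lemma aemeasurable_of_sum_measure_fiber_le {Ω V : Type*} [MeasurableSpace Ω] (μ : Measure Ω)
    [IsFiniteMeasure μ] [Fintype V] [MeasurableSpace V] [DiscreteMeasurableSpace V]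
    (A : Ω → V) (h : ∑ v, μ (A ⁻¹' {v}) ≤ μ Set.univ) : AEMeasurable A μ := by
  classical
  have fiber (v : V) : NullMeasurableSet (A ⁻¹' {v}) μ := by
    set B : Set Ω := ⋃ u ∈ Finset.univ.erase v, toMeasurable μ (A ⁻¹' {u})
    have hBm : MeasurableSet B :=
      Finset.measurableSet_biUnion _ fun u _ ↦ measurableSet_toMeasurable _ _
    have hBle : μ B ≤ ∑ u ∈ Finset.univ.erase v, μ (A ⁻¹' {u}) := by
      refine (measure_biUnion_finset_le _ _).trans_eq ?_
      simp [measure_toMeasurable]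
    have hsub : Bᶜ ⊆ A ⁻¹' {v} := by
      intro ω hω
      by_contra hne
      refine hω (Set.mem_biUnion (x := A ω) ?_ (subset_toMeasurable μ _ rfl))
      simpa using hne
    have hle : μ (A ⁻¹' {v}) ≤ μ Bᶜ := by
      rw [← Finset.add_sum_erase _ _ (Finset.mem_univ v), ← measure_add_measure_compl hBm,
        add_comm (μ B)] at h
      have := h.trans (add_le_add_right hBle _)
      exact (ENNReal.add_le_add_iff_right
        (ENNReal.sum_ne_top.2 fun u _ ↦ measure_ne_top _ _)).1 this
    exact hBm.compl.nullMeasurableSet.congr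
      (ae_eq_of_subset_of_measure_ge hsub hle hBm.compl.nullMeasurableSet (by finiteness))
  refine NullMeasurable.aemeasurable fun s _ ↦ ?_
  rw [← Set.biUnion_preimage_singleton]
  exact NullMeasurableSet.biUnion s.to_countable fun v _ ↦ fiber v

/-- For `m ≥ 2` i.i.d. proportional samples, the averaged pair estimator
`Z = C(m,2)⁻¹ · Σ_{i<j} Y_{ij}` satisfies `Var(Z) ≤ C(m,2)⁻¹ · n/W²`. -/
theorem averaged_pair_estimator_variance
    {Ω U : Type*} [MeasurableSpace Ω] (μ : Measure Ω) [IsProbabilityMeasure μ]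
    [Fintype U] [DecidableEq U]
    (n : ℕ) (hn : Fintype.card U = n)
    (w : U → ℝ) (hw : ∀ x, 0 < w x)
    (W : ℝ) (hW : W = ∑ x, w x)
    (m : ℕ) (hm : 2 ≤ m) (a : Fin m → Ω → U)
    (hlaw : ∀ v : Fin m → U,
      μ {ω | ∀ i, a i ω = v i} = ∏ i, ENNReal.ofReal (w (v i) / W))
    (Y : Fin m → Fin m → Ω → ℝ)
    (hY : ∀ i j ω, Y i j ω = if a i ω = a j ω then (w (a i ω))⁻¹ else 0)
    (Z : Ω → ℝ)
    (hZ : ∀ ω, Z ω = ((m.choose 2 : ℝ))⁻¹ * ∑ i, ∑ j ∈ Finset.Ioi i, Y i j ω) :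
    variance Z μ ≤ ((m.choose 2 : ℝ))⁻¹ * (n / W ^ 2) := by
  classical
  obtain ⟨ω₀⟩ : Nonempty Ω := nonempty_of_isProbabilityMeasure μ
  have : Nonempty U := ⟨a ⟨0, by omega⟩ ω₀⟩
  have hWpos : 0 < W := hW ▸ Finset.sum_pos (fun x _ ↦ hw x) Finset.univ_nonempty
  have hp : ∑ x, w x / W = 1 := by rw [← Finset.sum_div, ← hW, div_self hWpos.ne']
  have hp0 (x : U) : 0 ≤ w x / W := (div_pos (hw x) hWpos).le
  have hC : (0 : ℝ) < m.choose 2 := by exact_mod_cast Nat.choose_pos hm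
  let A : Ω → Fin m → U := fun ω i ↦ a i ω
  have fiber (v : Fin m → U) :
      μ (A ⁻¹' {v}) = ENNReal.ofReal (∏ i, w (v i) / W) := by
    rw [ENNReal.ofReal_prod_of_nonneg fun i _ ↦ hp0 _, ← hlaw]
    congr 1
    ext ω
    simp [A, funext_iff]
  let : MeasurableSpace (Fin m → U) := ⊤
  have hA : AEMeasurable A μ := by
    refine aemeasurable_of_sum_measure_fiber_le μ A ?_
    simp_rw [fiber]
    rw [← ENNReal.ofReal_sum_of_nonneg fun v _ ↦ Finset.prod_nonneg fun i _ ↦ hp0 _,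
      ← Fintype.prod_sum (fun _ : Fin m ↦ fun x ↦ w x / W)]
    simp [hp]
  have integral_eq (f : (Fin m → U) → ℝ) :
      ∫ ω, f (A ω) ∂μ = prodExpect (fun x ↦ w x / W) f := by
    have := Measure.isProbabilityMeasure_map hA
    rw [← integral_map hA (measurable_of_finite f).aestronglyMeasurable,
      integral_fintype .of_finite]
    refine Finset.sum_congr rfl fun v _ ↦ ?_
    rw [map_measureReal_apply_of_aemeasurable hA (.of_discrete), measureReal_def, fiber,
      ENNReal.toReal_ofReal (Finset.prod_nonneg fun i _ ↦ hp0 _), smul_eq_mul]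
  let T := (Finset.univ : Finset (Fin m)).sigma fun i ↦ Finset.Ioi i
  have hT : T.card = m.choose 2 := card_sigma_Ioi m
  let D (q : Σ _ : Fin m, Fin m) : (Fin m → U) → ℝ := centeredCollision w W q.1 q.2
  let f (v : Fin m → U) : ℝ := (m.choose 2 : ℝ)⁻¹ * ∑ q ∈ T, D q v
  have hZf : (fun ω ↦ Z ω - W⁻¹) = fun ω ↦ f (A ω) := by
    ext ω
    simp only [hZ, hY, f, D, A, centeredCollision, Finset.sum_sub_distrib, Finset.sum_const, hT,
      nsmul_eq_mul, T, Finset.sum_sigma]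
    field_simp
  have hfm : AEMeasurable (fun ω ↦ f (A ω)) μ := (measurable_of_finite f).comp_aemeasurable hA
  have hZm : AEStronglyMeasurable Z μ := by
    rw [← hZf] at hfm
    simpa using (hfm.add_const W⁻¹).aestronglyMeasurable
  have diag {q : Σ _ : Fin m, Fin m} (hq : q ∈ T) :
      ∑ r ∈ T, prodExpect (fun x ↦ w x / W) (fun v ↦ D q v * D r v) =
        n / W ^ 2 - (W ^ 2)⁻¹ := by
    have lt {r : Σ _ : Fin m, Fin m} (hr : r ∈ T) : r.1 < r.2 := by simpa [T] using hr
    rw [Finset.sum_eq_single q, prodExpect_centeredCollision_sq hw hWpos.ne' hp (lt hq).ne, hn]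
    · intro r hr hne
      refine prodExpect_centeredCollision_mul_of_ne hw hp (lt hq) (lt hr) fun h ↦ hne ?_
      exact Sigma.ext h.1.symm (heq_of_eq h.2.symm)
    · exact fun h ↦ absurd hq h
  calc variance Z μ = variance (fun ω ↦ f (A ω)) μ := by rw [← hZf, variance_sub_const hZm]
    _ ≤ ∫ ω, f (A ω) ^ 2 ∂μ := variance_le_expectation_sq hfm.aestronglyMeasurable
    _ = ((m.choose 2 : ℝ)⁻¹) ^ 2 *
        ∑ q ∈ T, ∑ r ∈ T, prodExpect (fun x ↦ w x / W) (fun v ↦ D q v * D r v) := by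
      rw [integral_eq fun v ↦ f v ^ 2]
      simp_rw [f, mul_pow, prodExpect_const_mul, pow_two (Finset.sum _ _), Finset.sum_mul_sum,
        prodExpect_sum]
    _ = (m.choose 2 : ℝ)⁻¹ * (n / W ^ 2 - (W ^ 2)⁻¹) := by
      rw [Finset.sum_congr rfl fun q hq ↦ diag hq, Finset.sum_const, hT, nsmul_eq_mul]
      field_simp
    _ ≤ (m.choose 2 : ℝ)⁻¹ * (n / W ^ 2) := by
      gcongr
      exact sub_le_self _ (by positivity)
end

section
/- For every sequence of parameters (n_k, ε_k, m_k) with n_k → ∞, 1/√(n_k) ≤ ε_k < 1/3, (1−ε_k)·n_k a positive integer, and m_k·ε_k/√(n_k) → 0, the following holds for all k large enough. Let N be equal to n_k with probability 1/2 and to (1−ε_k)·n_k otherwise; conditionally on N, draw m_k i.i.d. uniform samples X₁, …, X_{m_k} from a set of size N, and let Π be the partition of the index set {1, …, m_k} into blocks of equal samples (i.e., i and j lie in the same block iff X_i = X_j). Then for every function g mapping partitions of {1, …, m_k} to {n_k, (1−ε_k)·n_k}, the probability of correct identification satisfies P( g(Π) = N ) ≤ 3/5. In particular, no algorithm in the proportional-sampling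 model taking m_k = o(√(n_k)/ε_k) samples can output a (1±ε_k)-approximation of the total weight with probability 2/3 on all instances with |U| = n_k, even knowing n_k. -/
open MeasureTheory ProbabilityTheory Filter

open scoped Classical in
/-- Maps with a prescribed kernel are the same as embeddings of its quotient. -/
theorem card_filter_ker_eq (m N : ℕ) (s : Setoid (Fin m)) :
    (Finset.univ.filter fun v : Fin m → Fin N => Setoid.ker v = s).card =
      N.descFactorial (Nat.card (Quotient s)) := by
  have e : {v : Fin m → Fin N // Setoid.ker v = s} ≃ (Quotient s ↪ Fin N) :=
    { toFun := fun v => ⟨Quotient.lift v.1 fun a b h => by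
          have h' : (Setoid.ker v.1) a b := by rw [v.2]; exact h
          exact h', by
          rintro ⟨a⟩ ⟨b⟩ h
          refine Quotient.sound ?_
          have h' : (Setoid.ker v.1) a b := h
          rwa [v.2] at h'⟩
      invFun := fun f => ⟨fun i => f (Quotient.mk s i), by
        ext a b
        rw [Setoid.ker_def, f.injective.eq_iff, Quotient.eq]⟩
      left_inv := fun v => rfl
      right_inv := fun f => by
        ext ⟨a⟩
        rfl }
  rw [← Fintype.card_subtype, Fintype.card_congr e, Fintype.card_embedding_eq, Fintype.card_fin,
    Nat.card_eq_fintype_card]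

theorem card_quotient_ker {α β : Type*} [Fintype α] [DecidableEq β] (v : α → β) :
    Nat.card (Quotient (Setoid.ker v)) = (Finset.univ.image v).card := by
  rw [Nat.card_congr (Setoid.quotientKerEquivRange v), Nat.card_coe_set_eq,
    ← Set.ncard_coe_finset, Finset.coe_image, Finset.coe_univ, Set.image_univ]

open scoped Classical in
theorem sum_ker_eq_sum_setoid (m N : ℕ) [Fintype (Setoid (Fin m))] (F : Setoid (Fin m) → ℝ) :
    ∑ v : Fin m → Fin N, F (Setoid.ker v) =
      ∑ s : Setoid (Fin m), N.descFactorial (Nat.card (Quotient s)) * F s := by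
  rw [← Finset.sum_fiberwise_of_maps_to (s := Finset.univ) (t := Finset.univ)
    (g := fun v : Fin m → Fin N => Setoid.ker v) (fun _ _ => Finset.mem_univ _)]
  refine Finset.sum_congr rfl fun s _ => ?_
  rw [← card_filter_ker_eq, ← nsmul_eq_mul, ← Finset.sum_const]
  refine Finset.sum_congr rfl fun v hv => ?_
  rw [(Finset.mem_filter.1 hv).2]

/-- The unnormalised likelihood ratio of a partition into `b` blocks under two universe sizes. -/
noncomputable def blockRatio (N N' b : ℕ) : ℝ := (N'.descFactorial b : ℝ) / N.descFactorial b

theorem sum_ker_change_size {m N : ℕ} (N' : ℕ) (hmN : m ≤ N) (F : Setoid (Fin m) → ℝ) :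
    ∑ v : Fin m → Fin N', F (Setoid.ker v) =
      ∑ v : Fin m → Fin N, blockRatio N N' (Finset.univ.image v).card * F (Setoid.ker v) := by
  have : Finite (Setoid (Fin m)) :=
    Finite.of_injective (fun s : Setoid (Fin m) => (s : Fin m → Fin m → Prop)) fun s t h =>
      Setoid.ext fun a b => iff_of_eq (congrFun₂ h a b)
  have : Fintype (Setoid (Fin m)) := Fintype.ofFinite _
  simp_rw [← card_quotient_ker]
  rw [sum_ker_eq_sum_setoid,
    sum_ker_eq_sum_setoid m N fun s => blockRatio N N' (Nat.card (Quotient s)) * F s]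
  refine Finset.sum_congr rfl fun s _ => ?_
  have hb : Nat.card (Quotient s) ≤ N := by
    refine le_trans ?_ hmN
    simpa using Nat.card_le_card_of_surjective (Quotient.mk s) Quotient.mk_surjective
  have h0 : (N.descFactorial (Nat.card (Quotient s)) : ℝ) ≠ 0 := by
    exact_mod_cast (Nat.descFactorial_pos.2 hb).ne'
  rw [blockRatio]
  field_simp

theorem sum_card_insert {N : ℕ} (s : Finset (Fin N)) (h : ℕ → ℝ) :
    ∑ a, h (insert a s).card = s.card * h s.card + (N - s.card : ℝ) * h (s.card + 1) := by
  rw [← Finset.sum_add_sum_compl s]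
  congr 1
  · rw [← nsmul_eq_mul, ← Finset.sum_const]
    exact Finset.sum_congr rfl fun a ha => by rw [Finset.insert_eq_of_mem ha]
  · have hc : ((sᶜ.card : ℕ) : ℝ) = N - s.card := by
      rw [Finset.card_compl, Nat.cast_sub (Finset.card_le_univ s), Fintype.card_fin]
    rw [← hc, ← nsmul_eq_mul, ← Finset.sum_const]
    refine Finset.sum_congr rfl fun a ha => ?_
    rw [Finset.card_insert_of_notMem (Finset.mem_compl.1 ha)]

theorem sum_card_image_succ (m N : ℕ) (h : ℕ → ℝ) :
    ∑ v : Fin (m + 1) → Fin N, h (Finset.univ.image v).card =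
      ∑ v : Fin m → Fin N, ((Finset.univ.image v).card * h (Finset.univ.image v).card +
        (N - (Finset.univ.image v).card : ℝ) * h ((Finset.univ.image v).card + 1)) := by
  rw [← (Fin.consEquiv fun _ : Fin (m + 1) => Fin N).sum_comp, Fintype.sum_prod_type_right]
  refine Finset.sum_congr rfl fun v _ => ?_
  rw [← sum_card_insert]
  refine Finset.sum_congr rfl fun a _ => ?_
  congr 2
  ext x
  simp [Fin.exists_fin_succ, eq_comm]

theorem blockRatio_step {N N' b : ℕ} {δ : ℝ} (hb : b < N) (hb' : b ≤ N') (hN' : 0 < N')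
    (hδ : ((N : ℝ) - N') ^ 2 * b ≤ δ * (N' ^ 2 * (N - b))) :
    b * blockRatio N N' b ^ 2 + (N - b : ℝ) * blockRatio N N' (b + 1) ^ 2 ≤
      (N' ^ 2 / N * (1 + δ)) * blockRatio N N' b ^ 2 := by
  have hbN : (0 : ℝ) < N - b := sub_pos.2 (by exact_mod_cast hb)
  have hN : (0 : ℝ) < N := by exact_mod_cast (Nat.zero_le b).trans_lt hb
  have hsucc : blockRatio N N' (b + 1) = (N' - b) / (N - b) * blockRatio N N' b := by
    simp only [blockRatio, Nat.descFactorial_succ, Nat.cast_mul, Nat.cast_sub hb',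
      Nat.cast_sub hb.le]
    rw [mul_div_mul_comm]
  rw [hsucc, mul_pow, ← mul_assoc, ← add_mul]
  refine mul_le_mul_of_nonneg_right ?_ (sq_nonneg _)
  have key : (b : ℝ) + (N - b) * ((N' - b) / (N - b)) ^ 2 =
      (N' ^ 2 * (N - b) + (N - N') ^ 2 * b) / (N * (N - b)) := by
    field_simp
    ring
  have key' : (N' : ℝ) ^ 2 / N * (1 + δ) =
      (N' ^ 2 * (N - b) + δ * (N' ^ 2 * (N - b))) / (N * (N - b)) := by
    field_simp
  rw [key, key']
  gcongr

/-- Second moment of the likelihood ratio. -/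
theorem sum_blockRatio_sq_le {N N' M : ℕ} {δ : ℝ} (hN' : 0 < N') (hM : M < N) (hM' : M ≤ N')
    (hδ0 : 0 ≤ δ) (hδ : ∀ b ≤ M, ((N : ℝ) - N') ^ 2 * b ≤ δ * (N' ^ 2 * (N - b))) :
    ∀ m ≤ M, ∑ v : Fin m → Fin N, blockRatio N N' (Finset.univ.image v).card ^ 2 ≤
      (N' ^ 2 / N * (1 + δ)) ^ m := by
  intro m
  induction m with
  | zero => intro _; simp [blockRatio]
  | succ m ih =>
    intro hm
    rw [sum_card_image_succ m N fun b => blockRatio N N' b ^ 2, pow_succ']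
    refine le_trans ?_ (mul_le_mul_of_nonneg_left (ih (by omega)) (by positivity))
    rw [Finset.mul_sum]
    refine Finset.sum_le_sum fun v _ => ?_
    have hb : (Finset.univ.image v).card ≤ M := by
      refine (Finset.card_image_le).trans ?_
      simp
      omega
    exact blockRatio_step (hb.trans_lt hM) (hb.trans hM') hN' (hδ _ hb)

/-- The advantage of any event depending only on the partition. -/
theorem partition_event_advantage_le {N N' m : ℕ} {δ : ℝ} (hN' : 0 < N') (hm : m < N)
    (hm' : m ≤ N') (hδ0 : 0 ≤ δ)
    (hδ : ∀ b ≤ m, ((N : ℝ) - N') ^ 2 * b ≤ δ * (N' ^ 2 * (N - b)))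
    (hδm : (1 + δ) ^ m ≤ 26 / 25) (A : Setoid (Fin m) → Prop)
    [DecidablePred A] :
    ((Finset.univ.filter fun v : Fin m → Fin N' => A (Setoid.ker v)).card : ℝ) / N' ^ m -
      ((Finset.univ.filter fun v : Fin m → Fin N => A (Setoid.ker v)).card : ℝ) / N ^ m
        ≤ 1 / 5 := by
  have hNr : (0 : ℝ) < N := by exact_mod_cast (Nat.zero_le m).trans_lt hm
  have hNr' : (0 : ℝ) < N' := by exact_mod_cast hN'
  set R : (Fin m → Fin N) → ℝ := fun v => blockRatio N N' (Finset.univ.image v).card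
  set c : ℝ := (N : ℝ) ^ m / N' ^ m with hc
  have hmass : ∑ v, R v = (N' : ℝ) ^ m := by
    have := sum_ker_change_size N' hm.le fun _ => (1 : ℝ)
    simpa using this.symm
  have hsq : ∑ v, R v ^ 2 ≤ (N' ^ 2 / N * (1 + δ)) ^ m :=
    sum_blockRatio_sq_le hN' hm hm' hδ0 hδ m le_rfl
  have hA' : ((Finset.univ.filter fun v : Fin m → Fin N' => A (Setoid.ker v)).card : ℝ) =
      ∑ v, R v * if A (Setoid.ker v) then 1 else 0 := by
    rw [← sum_ker_change_size N' hm.le fun s => if A s then (1 : ℝ) else 0]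
    simp
  have hA : ((Finset.univ.filter fun v : Fin m → Fin N => A (Setoid.ker v)).card : ℝ) =
      ∑ v : Fin m → Fin N, if A (Setoid.ker v) then (1 : ℝ) else 0 := by
    simp
  have hcsq : c ^ 2 * ∑ v, R v ^ 2 ≤ N ^ m * (26 / 25) := by
    calc c ^ 2 * ∑ v, R v ^ 2 ≤ c ^ 2 * (N' ^ 2 / N * (1 + δ)) ^ m := by gcongr
      _ = N ^ m * (1 + δ) ^ m := by
        rw [hc, mul_pow, div_pow, div_pow]
        field_simp
        ring
      _ ≤ N ^ m * (26 / 25) := by gcongr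
  have hcm : c * ∑ v, R v = N ^ m := by
    rw [hmass, hc]
    field_simp
  have hmain : c * (∑ v, R v * if A (Setoid.ker v) then 1 else 0) -
      (∑ v : Fin m → Fin N, if A (Setoid.ker v) then (1 : ℝ) else 0) ≤ N ^ m * (1 / 5) := by
    calc _ = ∑ v, (c * R v - 1) * if A (Setoid.ker v) then 1 else 0 := by
          rw [Finset.mul_sum, ← Finset.sum_sub_distrib]
          exact Finset.sum_congr rfl fun v _ => by ring
      _ ≤ ∑ v, (1 / 10 + 5 / 2 * (c ^ 2 * R v ^ 2 - 2 * (c * R v) + 1)) := by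
          refine Finset.sum_le_sum fun v _ => ?_
          split_ifs
          · nlinarith [sq_nonneg (5 * (c * R v - 1) - 1)]
          · nlinarith [sq_nonneg (c * R v - 1)]
      _ = 1 / 10 * N ^ m +
            5 / 2 * (c ^ 2 * ∑ v, R v ^ 2 - 2 * (c * ∑ v, R v) + N ^ m) := by
          simp only [Finset.sum_add_distrib, Finset.sum_sub_distrib, ← Finset.mul_sum]
          simp
          ring
      _ ≤ N ^ m * (1 / 5) := by
          rw [hcm]
          linarith
  rw [hA', hA]
  have hNm : (0 : ℝ) < N ^ m := by positivity
  rw [← mul_le_mul_iff_right₀ hNm]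
  refine le_of_eq_of_le ?_ hmain
  rw [hc]
  field_simp

theorem measure_partition_event_le {Ω : Type*} [MeasurableSpace Ω] {μ : Measure Ω} {m r : ℕ}
    {E : Set Ω} {X : Fin m → Ω → ℕ} (hr : 0 < r)
    (hX : ∀ v : Fin m → ℕ, μ {ω | ω ∈ E ∧ ∀ i, X i ω = v i} =
      if ∀ i, v i < r then (1 / 2) * ((r : ENNReal))⁻¹ ^ m else 0)
    (A : Setoid (Fin m) → Prop)
    [DecidablePred A] :
    μ {ω | ω ∈ E ∧ A (Setoid.ker fun i => X i ω)} ≤ ENNReal.ofReal (1 / 2 *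
      (((Finset.univ.filter fun v : Fin m → Fin r => A (Setoid.ker v)).card : ℝ) / r ^ m)) := by
  set T := Finset.univ.filter fun v : Fin m → Fin r => A (Setoid.ker v) with hT
  have hsub : {ω | ω ∈ E ∧ A (Setoid.ker fun i => X i ω)} ⊆
      (⋃ v ∈ T, {ω | ω ∈ E ∧ ∀ i, X i ω = (v i : ℕ)}) ∪
        ⋃ v : {v : Fin m → ℕ // ¬ ∀ i, v i < r}, {ω | ω ∈ E ∧ ∀ i, X i ω = v.1 i} := by
    rintro ω ⟨hE, hA⟩
    by_cases h : ∀ i, X i ω < r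
    · left
      refine Set.mem_biUnion (x := fun i => (⟨X i ω, h i⟩ : Fin r)) ?_ ⟨hE, fun i => rfl⟩
      simp only [hT, Finset.coe_filter, Finset.mem_univ, true_and, Set.mem_ofPred_eq]
      convert hA using 1
      ext a b
      simp [Setoid.ker_def]
    · right
      exact Set.mem_iUnion.2 ⟨⟨fun i => X i ω, h⟩, hE, fun i => rfl⟩
  have hnull : μ (⋃ v : {v : Fin m → ℕ // ¬ ∀ i, v i < r},
      {ω | ω ∈ E ∧ ∀ i, X i ω = v.1 i}) = 0 :=
    measure_iUnion_null fun v => by rw [hX, if_neg v.2]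
  have hr' : (0 : ℝ) < r := by exact_mod_cast hr
  calc _ ≤ _ := measure_mono hsub
    _ ≤ _ := measure_union_le _ _
    _ = μ (⋃ v ∈ T, {ω | ω ∈ E ∧ ∀ i, X i ω = (v i : ℕ)}) := by rw [hnull, add_zero]
    _ ≤ ∑ v ∈ T, μ {ω | ω ∈ E ∧ ∀ i, X i ω = (v i : ℕ)} := measure_biUnion_finset_le _ _
    _ = ∑ v ∈ T, (1 / 2) * ((r : ENNReal))⁻¹ ^ m :=
        Finset.sum_congr rfl fun v _ => by rw [hX, if_pos fun i => (v i).2]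
    _ = _ := by
        have h1 : (1 / 2) * ((r : ENNReal))⁻¹ ^ m = ENNReal.ofReal (1 / 2 * (r : ℝ)⁻¹ ^ m) := by
          rw [ENNReal.ofReal_mul (by norm_num), ENNReal.ofReal_pow (by positivity),
            ENNReal.ofReal_inv_of_pos hr', ENNReal.ofReal_natCast,
            ENNReal.ofReal_div_of_pos (by norm_num)]
          simp
        rw [h1, Finset.sum_const, ← ENNReal.ofReal_nsmul, nsmul_eq_mul, inv_pow]
        congr 1
        ring

/-- (Lower bound for the proportional setting.)
For parameter sequences `(n_k, ε_k, m_k)` with `n_k → ∞`, `1/√(n_k) ≤ ε_k < 1/3`,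
`(1−ε_k)·n_k = n'_k` a positive integer, and `m_k·ε_k/√(n_k) → 0`, the following holds
for all `k` large enough.  Let `N` be `n_k` or `n'_k` each with probability `1/2`;
conditionally on `N`, draw `m_k` i.i.d. uniform samples `X₁, …, X_{m_k}` from a set of
size `N`, and let `Π` be the partition of the index set into blocks of equal samples
(the kernel of `i ↦ X_i`).  Then every function `g` from partitions to `{n_k, n'_k}`
identifies `N` correctly with probability at most `3/5`.  (Hence no algorithm in the
proportional-sampling model taking `o(√n/ε)` samples can `(1±ε)`-approximate the total
weight with probability `2/3`, even knowing `n`.) -/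
theorem proportional_setting_lower_bound
    (n n' m : ℕ → ℕ) (ε : ℕ → ℝ)
    (hε : ∀ k, 1 / Real.sqrt (n k) ≤ ε k ∧ ε k < 1 / 3)
    (hn' : ∀ k, 0 < n' k ∧ ((n' k : ℝ) = (1 - ε k) * n k))
    (hn : Tendsto (fun k => (n k : ℝ)) atTop atTop)
    (hm : Tendsto (fun k => (m k : ℝ) * ε k / Real.sqrt (n k)) atTop (nhds 0)) :
    ∀ᶠ k in atTop,
      ∀ (Ω : Type) (_ : MeasurableSpace Ω) (μ : Measure Ω) (_ : IsProbabilityMeasure μ)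
        (N : Ω → ℕ) (X : Fin (m k) → Ω → ℕ),
        (∀ ω, N ω = n k ∨ N ω = n' k) →
        (∀ r : ℕ, (r = n k ∨ r = n' k) → ∀ v : Fin (m k) → ℕ,
          μ {ω | N ω = r ∧ ∀ i, X i ω = v i} =
            if ∀ i, v i < r then (1 / 2) * ((r : ENNReal))⁻¹ ^ (m k) else 0) →
        ∀ g : Setoid (Fin (m k)) → ℕ,
          μ {ω | g (Setoid.ker (fun i => X i ω)) = N ω} ≤ 3 / 5 := by
  filter_upwards [hn.eventually_gt_atTop 0,
    hm.eventually_lt_const (show (0 : ℝ) < 1 / 15 by norm_num)]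
    with k hnk hmk Ω _ μ _ N X hN hX g
  obtain ⟨hε1, hε2⟩ := hε k
  obtain ⟨hn'0, hn'e⟩ := hn' k
  have hX₁ := hX (n k) (Or.inl rfl)
  have hX₂ := hX (n' k) (Or.inr rfl)
  generalize n k = a at *
  generalize n' k = a' at *
  generalize ε k = e at *
  generalize m k = M at *
  have hs : 0 < Real.sqrt a := Real.sqrt_pos.2 hnk
  have hss : Real.sqrt a ^ 2 = a := Real.sq_sqrt hnk.le
  have he0 : 0 < e := lt_of_lt_of_le (by positivity) hε1
  have hes : 1 ≤ e * Real.sqrt a := (div_le_iff₀ hs).1 hε1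
  have hme : M * e < Real.sqrt a / 15 := by
    have := (div_lt_iff₀ hs).1 hmk
    linarith
  have hma : (M : ℝ) < a / 15 := by
    have h1 : (M : ℝ) * 1 ≤ M * (e * Real.sqrt a) := by gcongr
    have h2 : M * e * Real.sqrt a < Real.sqrt a / 15 * Real.sqrt a := by gcongr
    nlinarith
  have ha'23 : (2 / 3 : ℝ) * a ≤ a' := by
    rw [hn'e]
    gcongr
    linarith
  have hne : a ≠ a' := by
    rintro rfl
    nlinarith
  set δ : ℝ := 9 / 2 * e ^ 2 * M / a with hδ
  have hδ0 : 0 ≤ δ := by positivity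
  have hadv := partition_event_advantage_le (N := a) (N' := a') (m := M) (δ := δ) hn'0
    (by exact_mod_cast (show (M : ℝ) < a by linarith))
    (by exact_mod_cast (show (M : ℝ) ≤ a' by linarith)) hδ0
    (by
      intro b hb
      have hbM : (b : ℝ) ≤ M := by exact_mod_cast hb
      have h1 : (4 / 9 : ℝ) * a ^ 2 * (a / 2) ≤ a' ^ 2 * (a - b) := by
        have h2 : (4 / 9 : ℝ) * a ^ 2 ≤ a' ^ 2 := by nlinarith
        have h3 : (a / 2 : ℝ) ≤ a - b := by linarith
        gcongr
      calc ((a : ℝ) - a') ^ 2 * b = e ^ 2 * a ^ 2 * b := by rw [hn'e]; ring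
        _ ≤ e ^ 2 * a ^ 2 * M := by gcongr
        _ = δ * (4 / 9 * a ^ 2 * (a / 2)) := by
          rw [hδ]
          field_simp
          norm_num
        _ ≤ _ := by gcongr)
    (by
      have h1 : M * δ ≤ 1 / 50 := by
        have h2 : (M * e) ^ 2 ≤ (Real.sqrt a / 15) ^ 2 := by gcongr
        rw [div_pow, hss] at h2
        rw [hδ, mul_div_assoc', div_le_iff₀ hnk]
        nlinarith
      calc (1 + δ) ^ M ≤ Real.exp δ ^ M := by
            gcongr
            linarith [Real.add_one_le_exp δ]
        _ = Real.exp (M * δ) := by rw [← Real.exp_nat_mul]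
        _ ≤ Real.exp (1 / 50) := Real.exp_le_exp.2 h1
        _ ≤ 26 / 25 := by
          have h3 := Real.add_one_le_exp (-(1 / 50) : ℝ)
          have h4 : Real.exp (1 / 50) * Real.exp (-(1 / 50)) = 1 := by
            rw [← Real.exp_add]; simp
          nlinarith [Real.exp_pos (1 / 50 : ℝ)])
    (fun s => g s ≠ a)
  have hcompl : ((Finset.univ.filter fun v : Fin M → Fin a => g (Setoid.ker v) = a).card : ℝ) /
      a ^ M + ((Finset.univ.filter fun v : Fin M → Fin a => g (Setoid.ker v) ≠ a).card : ℝ) /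
      a ^ M = 1 := by
    rw [← add_div, div_eq_one_iff_eq (by positivity)]
    have := Finset.card_filter_add_card_filter_not (s := Finset.univ)
      (fun v : Fin M → Fin a => g (Setoid.ker v) = a)
    rw [← Nat.cast_add, this]
    simp
  have hμ₁ := measure_partition_event_le (E := {ω | N ω = a}) (by exact_mod_cast hnk) hX₁
    (fun s => g s = a)
  have hμ₂ := measure_partition_event_le (E := {ω | N ω = a'}) hn'0 hX₂ (fun s => g s ≠ a)
  calc μ {ω | g (Setoid.ker fun i => X i ω) = N ω}
      ≤ μ ({ω | ω ∈ {ω | N ω = a} ∧ g (Setoid.ker fun i => X i ω) = a} ∪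
          {ω | ω ∈ {ω | N ω = a'} ∧ g (Setoid.ker fun i => X i ω) ≠ a}) := by
        refine measure_mono fun ω hω => ?_
        rcases hN ω with h | h
        · exact Or.inl ⟨h, hω.trans h⟩
        · exact Or.inr ⟨h, fun h' => hne (h'.symm.trans (hω.trans h))⟩
    _ ≤ _ := measure_union_le _ _
    _ ≤ _ := add_le_add hμ₁ hμ₂
    _ = _ := (ENNReal.ofReal_add (by positivity) (by positivity)).symm
    _ ≤ ENNReal.ofReal (3 / 5) := ENNReal.ofReal_le_ofReal (by linarith)
    _ = 3 / 5 := by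
        rw [ENNReal.ofReal_div_of_pos (by norm_num)]
        simp
end
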